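/- Let Γ₁ and Γ₂ be digraphons on a probability space (Ω,μ) with Γ₁(x,y) ≤ Γ₂(x,y) for almost every (x,y) ∈ Ω². Then ρ(Γ₁) ≤ ρ(Γ₂). -/

import Mathlib

open MeasureTheory Filter Set Topology
open scoped ENNReal Real

namespace Digraphon

variable {Ω : Type*} [MeasurableSpace Ω]

/-- `kpowAux μ Γ n` is the `(n+1)`-st kernel power of `Γ`. -/
noncomputable def kpowAux (μ : Measure Ω) (Γ : Ω → Ω → ℝ) : ℕ → Ω → Ω → ℝ
  | 0 => Γ
  | n + 1 => fun x y => ∫ z, Γ x z * kpowAux μ Γ n z y ∂μ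

/-- `dpow μ Γ k` is the `k`-th kernel power of `Γ` (intended for `k ≥ 1`). -/
noncomputable def dpow (μ : Measure Ω) (Γ : Ω → Ω → ℝ) (k : ℕ) : Ω → Ω → ℝ :=
  kpowAux μ Γ (k - 1)

noncomputable def kpowAuxC (μ : Measure Ω) (Γ : Ω → Ω → ℂ) : ℕ → Ω → Ω → ℂ
  | 0 => Γ
  | n + 1 => fun x y => ∫ z, Γ x z * kpowAuxC μ Γ n z y ∂μ

noncomputable def dpowC (μ : Measure Ω) (Γ : Ω → Ω → ℂ) (k : ℕ) : Ω → Ω → ℂ :=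
  kpowAuxC μ Γ (k - 1)

/-- The set of points reachable from `x`. -/
def ReachOut (μ : Measure Ω) (Γ : Ω → Ω → ℝ) (x : Ω) : Set Ω :=
  {z | ∃ k : ℕ, 1 ≤ k ∧ 0 < dpow μ Γ k x z}

/-- The reachability sequence from `x` to `y`. -/
def reachSeq (μ : Measure Ω) (Γ : Ω → Ω → ℝ) (x y : Ω) : Set ℕ :=
  {k : ℕ | 1 ≤ k ∧ 0 < dpow μ Γ k x y}

/-- A digraphon: a measurable kernel with values in `[0,1]`. -/
def IsDigraphon (Γ : Ω → Ω → ℝ) : Prop :=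
  Measurable (Function.uncurry Γ) ∧ ∀ x y, Γ x y ∈ Set.Icc (0 : ℝ) 1

/-- `X` is strongly connected in `Γ`. -/
def StronglyConnectedIn (μ : Measure Ω) (Γ : Ω → Ω → ℝ) (X : Set Ω) : Prop :=
  MeasurableSet X ∧ 0 < μ X ∧
    ∀ A B : Set Ω, MeasurableSet A → MeasurableSet B → A ∪ B = X → Disjoint A B →
      0 < μ A → 0 < μ B → 0 < ∫ x in A, ∫ y in B, Γ x y ∂μ ∂μ

/-- `X` is a strong component in `Γ`. -/
def StrongComponent (μ : Measure Ω) (Γ : Ω → Ω → ℝ) (X : Set Ω) : Prop :=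
  StronglyConnectedIn μ Γ X ∧
    ∀ Y : Set Ω, MeasurableSet Y → 0 < μ (X ∩ Y) → 0 < μ (Y \ X) →
      ¬ StronglyConnectedIn μ Γ Y

/-- `X` is fragmented in `Γ`. -/
def Fragmented (μ : Measure Ω) (Γ : Ω → Ω → ℝ) (X : Set Ω) : Prop :=
  ∀ Y : Set Ω, Y ⊆ X → MeasurableSet Y → ¬ StronglyConnectedIn μ Γ Y

/-- `τ` is an eigenvalue of the integral kernel operator of `Γ` on `L²(Ω;ℂ)`. -/
def IsEigenvalue (μ : Measure Ω) (Γ : Ω → Ω → ℝ) (τ : ℂ) : Prop :=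
  ∃ f : Ω → ℂ, MemLp f 2 μ ∧ ¬(f =ᵐ[μ] 0) ∧
    ∀ᵐ x ∂μ, ∫ y, f y * (Γ y x : ℂ) ∂μ = τ * f x

/-- The spectral radius of `Γ` (`0` if there are no eigenvalues). -/
noncomputable def specRad (μ : Measure Ω) (Γ : Ω → Ω → ℝ) : ℝ :=
  sSup (insert 0 {r : ℝ | ∃ τ : ℂ, IsEigenvalue μ Γ τ ∧ ‖τ‖ = r})

/-- The number of eigenvalues of modulus `specRad μ Γ`. -/
noncomputable def periphMult (μ : Measure Ω) (Γ : Ω → Ω → ℝ) : ℕ :=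
  {τ : ℂ | IsEigenvalue μ Γ τ ∧ ‖τ‖ = specRad μ Γ}.ncard

/-- `P : ZMod d → Set Ω` witnesses graphical `d`-periodicity of `Γ`. -/
def IsPeriodicityWitness (μ : Measure Ω) (Γ : Ω → Ω → ℝ) {d : ℕ} (P : ZMod d → Set Ω) : Prop :=
  (∀ j, MeasurableSet (P j)) ∧ Pairwise (Function.onFun Disjoint P) ∧ (⋃ j, P j) = Set.univ ∧
    ∀ j : ZMod d, (μ.prod μ) {p : Ω × Ω | p.1 ∈ P j ∧ p.2 ∉ P (j + 1) ∧ Γ p.1 p.2 ≠ 0} = 0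

/-- `Γ` is graphically `d`-periodic. -/
def GraphPeriodic (μ : Measure Ω) (Γ : Ω → Ω → ℝ) (d : ℕ) : Prop :=
  ∃ P : ZMod d → Set Ω, IsPeriodicityWitness μ Γ P

/-- `Γ` is aperiodic. -/
def Aperiodic (μ : Measure Ω) (Γ : Ω → Ω → ℝ) : Prop :=
  ∀ d : ℕ, 1 ≤ d → GraphPeriodic μ Γ d → d = 1

/-- `S ⊆ ℕ` is eventually `D`-periodic with shift `s`. -/
def EvPeriodic (D : ℕ) (s : ℤ) (S : Set ℕ) : Prop :=
  (∀ n ∈ S, (D : ℤ) ∣ ((n : ℤ) - s)) ∧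
    ∃ k : ℕ, ∀ n : ℕ, k ≤ n → (((D : ℤ) ∣ ((n : ℤ) - s)) ↔ n ∈ S)

/-- The homomorphism density `t(C_k, Γ)` of the directed `k`-cycle. -/
noncomputable def cycleDensity (μ : Measure Ω) (Γ : Ω → Ω → ℝ) (k : ℕ) : ℝ :=
  ∫ x : Fin k → Ω, ∏ i : Fin k, Γ (x i) (x (finRotate k i)) ∂(Measure.pi fun _ => μ)

/-- `Γ⟦A⟧` : the kernel equal to `Γ` on `A × A` and `0` elsewhere. -/
noncomputable def kerRestrict (Γ : Ω → Ω → ℝ) (A : Set Ω) : Ω → Ω → ℝ :=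
  fun x y => (A ×ˢ A).indicator (Function.uncurry Γ) (x, y)

/-- Equality of sets modulo a `μ`-nullset. -/
def AEEqSet (μ : Measure Ω) (A B : Set Ω) : Prop := μ ((A \ B) ∪ (B \ A)) = 0

/-- The normalized restriction of `μ` to `A`, as a measure on `↥A`. -/
noncomputable def subMeasure (μ : Measure Ω) (A : Set Ω) : Measure ↥A :=
  (μ A)⁻¹ • Measure.comap Subtype.val μ

/-- The restriction of a kernel to `A × A`, as a kernel on `↥A`. -/
def subKernel (Γ : Ω → Ω → ℝ) (A : Set Ω) : ↥A → ↥A → ℝ :=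
  fun a b => Γ ↑a ↑b

/-- A finite oriented graph: no pair of antiparallel edges (in particular no loops). -/
structure OrientedGraph where
  n : ℕ
  E : Finset (Fin n × Fin n)
  no_anti : ∀ e ∈ E, (e.2, e.1) ∉ E

/-- The homomorphism density `t(D, Γ)` of an oriented graph `D`. -/
noncomputable def homDensity (μ : Measure Ω) (Γ : Ω → Ω → ℝ) (D : OrientedGraph) : ℝ :=
  ∫ x : Fin D.n → Ω, ∏ e ∈ D.E, Γ (x e.1) (x e.2) ∂(Measure.pi fun _ => μ)

/-- The cut norm distance of two kernels. -/
noncomputable def cutNormDist (μ : Measure Ω) (U W : Ω → Ω → ℝ) : ℝ :=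
  sSup {r : ℝ | ∃ S T : Set Ω, MeasurableSet S ∧ MeasurableSet T ∧
    r = |∫ x in S, ∫ y in T, (U x y - W x y) ∂μ ∂μ|}

/-- The cut distance of two kernels. -/
noncomputable def cutDist (μ : Measure Ω) (U W : Ω → Ω → ℝ) : ℝ :=
  sInf {r : ℝ | ∃ e : Ω ≃ᵐ Ω, MeasurePreserving e μ μ ∧
    r = cutNormDist μ U (fun x y => W (e x) (e y))}

/-!
Let `T₁`, `T₂` be the operators of `Γ₁`, `Γ₂`. Since `0 ≤ Γ₁ ≤ Γ₂`, we have `|T₁ f| ≤ T₂ g` whenever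
`|f| ≤ g`. This domination passes to powers, so `‖T₁ ^ n‖ ≤ ‖T₂ ^ n‖` for all `n`, and Gelfand's
formula compares the spectral radii of the operators. Those agree with the suprema of the moduli of
the eigenvalues, because a Hilbert–Schmidt operator is compact: the kernels with a compact operator
form a closed subspace containing the indicators of rectangles, which span a dense subspace of `L²`.
-/

section SpectralRadius

theorem spectralRadius_le_spectralRadius_of_norm_pow_le {A B : Type*}
    [NormedRing A] [NormedAlgebra ℂ A] [CompleteSpace A]
    [NormedRing B] [NormedAlgebra ℂ B] [CompleteSpace B] {a : A} {b : B}
    (h : ∀ n : ℕ, ‖a ^ n‖ ≤ ‖b ^ n‖) : spectralRadius ℂ a ≤ spectralRadius ℂ b := by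
  refine le_of_tendsto_of_tendsto' (spectrum.pow_norm_pow_one_div_tendsto_nhds_spectralRadius a)
    (spectrum.pow_norm_pow_one_div_tendsto_nhds_spectralRadius b) fun n => ?_
  gcongr
  exact h n

theorem spectralRadius_ne_top {𝕜 A : Type*} [NormedField 𝕜] [NormedRing A] [NormedAlgebra 𝕜 A]
    [CompleteSpace A] (a : A) : spectralRadius 𝕜 a ≠ ∞ :=
  ((spectrum.spectralRadius_le_pow_nnnorm_pow_one_div 𝕜 a 0).trans_lt
    (by simp [ENNReal.mul_lt_top])).ne

theorem isGreatest_toReal_spectralRadius_of_isCompactOperator {X : Type*} [NormedAddCommGroup X]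
    [NormedSpace ℂ X] [CompleteSpace X] {T : X →L[ℂ] X} (hT : IsCompactOperator T) :
    IsGreatest
      (insert 0 {r : ℝ | ∃ τ : ℂ, Module.End.HasEigenvalue (T : Module.End ℂ X) τ ∧ ‖τ‖ = r})
      (spectralRadius ℂ T).toReal := by
  constructor
  · rcases eq_or_ne (spectralRadius ℂ T) 0 with hρ | hρ
    · exact .inl (by simp [hρ])
    have : Nontrivial (X →L[ℂ] X) := by
      by_contra h
      rw [not_nontrivial_iff_subsingleton] at h
      exact hρ (spectrum.SpectralRadius.of_subsingleton T)
    obtain ⟨τ, hτ, hτρ⟩ := spectrum.exists_nnnorm_eq_spectralRadius T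
    have hτ0 : τ ≠ 0 := by
      rintro rfl
      exact hρ (by simp [← hτρ])
    exact .inr ⟨τ, (hT.hasEigenvalue_iff_mem_spectrum hτ0).2 hτ, by simp [← hτρ]⟩
  · rintro r (rfl | ⟨τ, hτ, rfl⟩)
    · exact ENNReal.toReal_nonneg
    · rcases eq_or_ne τ 0 with rfl | hτ0
      · simp
      have hle : (‖τ‖₊ : ℝ≥0∞) ≤ spectralRadius ℂ T :=
        le_iSup₂ (f := fun k (_ : k ∈ spectrum ℂ T) => (‖k‖₊ : ℝ≥0∞)) τ
          ((hT.hasEigenvalue_iff_mem_spectrum hτ0).1 hτ)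
      simpa using ENNReal.toReal_mono (spectralRadius_ne_top T) hle

end SpectralRadius

section ZeroIntegrals

variable {E : Type*} [NormedAddCommGroup E] [NormedSpace ℝ E] [CompleteSpace E]

theorem ae_eq_zero_of_forall_setIntegral_eq_zero_of_isPiSystem {α : Type*} {m : MeasurableSpace α}
    {μ : Measure α} {C : Set (Set α)} (hm : m = MeasurableSpace.generateFrom C)
    (hC : IsPiSystem C) {f : α → E} (hf : Integrable f μ) (huniv : ∫ x, f x ∂μ = 0)
    (h : ∀ s ∈ C, ∫ x in s, f x ∂μ = 0) : f =ᵐ[μ] 0 := by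
  have setIntegral_eq_zero (s : Set α) (hs : MeasurableSet s) : ∫ x in s, f x ∂μ = 0 := by
    induction s, hs using MeasurableSpace.induction_on_inter hm hC with
    | empty => simp
    | basic s hs => exact h s hs
    | compl s hs ih => rw [setIntegral_compl hs hf, huniv, ih, sub_zero]
    | iUnion s hd hs ih => simp [integral_iUnion hs hd hf.integrableOn, ih]
  exact hf.ae_eq_zero_of_forall_setIntegral_eq_zero fun s hs _ => setIntegral_eq_zero s hs

theorem ae_eq_zero_of_forall_setIntegral_prod_eq_zero {α β : Type*} [MeasurableSpace α]
    [MeasurableSpace β] {μ : Measure α} {ν : Measure β} [SigmaFinite μ] [SigmaFinite ν]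
    {f : α × β → E}
    (hf : ∀ s t, MeasurableSet s → MeasurableSet t → μ s < ∞ → ν t < ∞ →
      IntegrableOn f (s ×ˢ t) (μ.prod ν))
    (h : ∀ s t, MeasurableSet s → MeasurableSet t → μ s < ∞ → ν t < ∞ →
      ∫ p in s ×ˢ t, f p ∂(μ.prod ν) = 0) : f =ᵐ[μ.prod ν] 0 := by
  have hcover : ⋃ n, spanningSets μ n ×ˢ spanningSets ν n = univ := by
    rw [iUnion_prod_of_monotone (monotone_spanningSets μ) (monotone_spanningSets ν),
      iUnion_spanningSets, iUnion_spanningSets, univ_prod_univ]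
  rw [← Measure.restrict_univ (μ := μ.prod ν), ← hcover, EventuallyEq, ae_restrict_iUnion_iff]
  intro n
  have hS := measurableSet_spanningSets μ n
  have hT := measurableSet_spanningSets ν n
  have hμS := measure_spanningSets_lt_top μ n
  have hνT := measure_spanningSets_lt_top ν n
  refine ae_eq_zero_of_forall_setIntegral_eq_zero_of_isPiSystem generateFrom_prod.symm
    isPiSystem_prod (hf _ _ hS hT hμS hνT) (h _ _ hS hT hμS hνT) ?_
  rintro _ ⟨s, hs, t, ht, rfl⟩
  rw [Measure.restrict_restrict (hs.prod ht), prod_inter_prod]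
  exact h _ _ (hs.inter hS) (ht.inter hT) (measure_inter_lt_top_of_right_ne_top hμS.ne)
    (measure_inter_lt_top_of_right_ne_top hνT.ne)

end ZeroIntegrals

section KernelOperator

theorem eLpNorm_two_sq {α E : Type*} [MeasurableSpace α] {μ : Measure α} [NormedAddCommGroup E]
    (f : α → E) : eLpNorm f 2 μ ^ 2 = ∫⁻ x, ‖f x‖ₑ ^ 2 ∂μ := by
  simpa using eLpNorm_nnreal_pow_eq_lintegral (f := f) (μ := μ) (p := 2) two_ne_zero

variable {𝕜 α β : Type*} [RCLike 𝕜] [MeasurableSpace α] [MeasurableSpace β]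
  {μ : Measure α} {ν : Measure β} [SFinite ν]

theorem measure_prod_ne_top {s : Set α} {t : Set β} (hμs : μ s ≠ ∞) (hνt : ν t ≠ ∞) :
    (μ.prod ν) (s ×ˢ t) ≠ ∞ := by
  rw [Measure.prod_prod]
  exact ENNReal.mul_ne_top hμs hνt

theorem eLpNorm_integral_mul_le {K : α × β → 𝕜} (hK : AEStronglyMeasurable K (μ.prod ν))
    {f : β → 𝕜} (hf : AEStronglyMeasurable f ν) :
    eLpNorm (fun x => ∫ y, K (x, y) * f y ∂ν) 2 μ ≤ eLpNorm K 2 (μ.prod ν) * eLpNorm f 2 ν := by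
  have hm : AEMeasurable (fun p => ‖K p‖ₑ ^ 2) (μ.prod ν) := hK.enorm.pow_const 2
  have cauchy_schwarz : ∀ᵐ x ∂μ, ‖∫ y, K (x, y) * f y ∂ν‖ₑ ≤
      eLpNorm (fun y => K (x, y)) 2 ν * eLpNorm f 2 ν := by
    filter_upwards [hK.prodMk_left] with x hx
    calc ‖∫ y, K (x, y) * f y ∂ν‖ₑ
        ≤ ∫⁻ y, ‖K (x, y) * f y‖ₑ ∂ν := enorm_integral_le_lintegral_enorm _
      _ = eLpNorm ((fun y => K (x, y)) • f) 1 ν := by rw [eLpNorm_one_eq_lintegral_enorm]; rfl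
      _ ≤ _ := eLpNorm_smul_le_mul_eLpNorm hf hx
  rw [← ENNReal.pow_le_pow_left_iff two_ne_zero]
  calc eLpNorm (fun x => ∫ y, K (x, y) * f y ∂ν) 2 μ ^ 2
      = ∫⁻ x, ‖∫ y, K (x, y) * f y ∂ν‖ₑ ^ 2 ∂μ := eLpNorm_two_sq _
    _ ≤ ∫⁻ x, (eLpNorm (fun y => K (x, y)) 2 ν * eLpNorm f 2 ν) ^ 2 ∂μ := by
        refine lintegral_mono_ae ?_
        filter_upwards [cauchy_schwarz] with x hx
        gcongr
    _ = (∫⁻ x, ∫⁻ y, ‖K (x, y)‖ₑ ^ 2 ∂ν ∂μ) * eLpNorm f 2 ν ^ 2 := by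
        simp only [mul_pow, eLpNorm_two_sq]
        exact lintegral_mul_const'' _ hm.lintegral_prod_right'
    _ = (eLpNorm K 2 (μ.prod ν) * eLpNorm f 2 ν) ^ 2 := by
        rw [mul_pow, eLpNorm_two_sq K, lintegral_prod _ hm]

theorem memLp_integral_mul {K : α × β → 𝕜} (hK : MemLp K 2 (μ.prod ν)) {f : β → 𝕜}
    (hf : MemLp f 2 ν) : MemLp (fun x => ∫ y, K (x, y) * f y ∂ν) 2 μ :=
  ⟨(hK.1.mul hf.1.comp_snd).integral_prod_right',
    (eLpNorm_integral_mul_le hK.1 hf.1).trans_lt (ENNReal.mul_lt_top hK.2 hf.2)⟩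

variable [SFinite μ]

theorem ae_memLp_prodMk_left {E : Type*} [NormedAddCommGroup E] {p : ℝ≥0∞} (hp₀ : p ≠ 0)
    (hp : p ≠ ∞) {K : α × β → E} (hK : MemLp K p (μ.prod ν)) :
    ∀ᵐ x ∂μ, MemLp (fun y => K (x, y)) p ν := by
  filter_upwards [hK.1.prodMk_left, (hK.integrable_norm_rpow hp₀ hp).prod_right_ae] with x hm hi
  exact (integrable_norm_rpow_iff hm hp₀ hp).1 hi

theorem ae_integrable_mul_prodMk_left {K : α × β → 𝕜} (hK : MemLp K 2 (μ.prod ν)) {f : β → 𝕜}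
    (hf : MemLp f 2 ν) : ∀ᵐ x ∂μ, Integrable (fun y => K (x, y) * f y) ν := by
  filter_upwards [ae_memLp_prodMk_left two_ne_zero ENNReal.ofNat_ne_top hK] with x hx
  exact hx.integrable_mul hf

/-- The algebraic part of `kernelOp`: the bilinear map sending `K` and `f` to the function
`x ↦ ∫ y, K (x, y) * f y ∂ν`. -/
noncomputable def kernelOpₗ : Lp 𝕜 2 (μ.prod ν) →ₗ[𝕜] Lp 𝕜 2 ν →ₗ[𝕜] Lp 𝕜 2 μ :=
  LinearMap.mk₂ 𝕜 (fun K f => (memLp_integral_mul (Lp.memLp K) (Lp.memLp f)).toLp _)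
    (fun K K' f => by
      rw [← MemLp.toLp_add]
      refine MemLp.toLp_congr _ _ ?_
      filter_upwards [ae_integrable_mul_prodMk_left (Lp.memLp K) (Lp.memLp f),
        ae_integrable_mul_prodMk_left (Lp.memLp K') (Lp.memLp f),
        Measure.ae_ae_of_ae_prod (Lp.coeFn_add K K')] with x hK hK' hadd
      rw [Pi.add_apply, ← integral_add hK hK']
      refine integral_congr_ae ?_
      filter_upwards [hadd] with y hy
      rw [hy, Pi.add_apply, add_mul])
    (fun c K f => by
      rw [← MemLp.toLp_const_smul]
      refine MemLp.toLp_congr _ _ ?_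
      filter_upwards [Measure.ae_ae_of_ae_prod (Lp.coeFn_smul c K)] with x hsmul
      rw [Pi.smul_apply, ← integral_smul]
      refine integral_congr_ae ?_
      filter_upwards [hsmul] with y hy
      rw [hy, Pi.smul_apply, smul_mul_assoc])
    (fun K f g => by
      rw [← MemLp.toLp_add]
      refine MemLp.toLp_congr _ _ ?_
      filter_upwards [ae_integrable_mul_prodMk_left (Lp.memLp K) (Lp.memLp f),
        ae_integrable_mul_prodMk_left (Lp.memLp K) (Lp.memLp g)] with x hf hg
      rw [Pi.add_apply, ← integral_add hf hg]
      refine integral_congr_ae ?_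
      filter_upwards [Lp.coeFn_add f g] with y hy
      rw [hy, Pi.add_apply, mul_add])
    (fun c K f => by
      rw [← MemLp.toLp_const_smul]
      refine MemLp.toLp_congr _ _ (.of_forall fun x => ?_)
      rw [Pi.smul_apply, ← integral_smul]
      refine integral_congr_ae ?_
      filter_upwards [Lp.coeFn_smul c f] with y hy
      rw [hy, Pi.smul_apply, mul_smul_comm])

/-- The Hilbert–Schmidt operator `f ↦ ∫ y, K (x, y) * f y ∂ν` of a square-integrable kernel `K`.
It is bundled as a continuous linear map in `K` too, so that a closed condition on operators is a
closed condition on kernels. -/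
noncomputable def kernelOp : Lp 𝕜 2 (μ.prod ν) →L[𝕜] Lp 𝕜 2 ν →L[𝕜] Lp 𝕜 2 μ :=
  kernelOpₗ.mkContinuous₂ 1 fun K f => by
    rw [kernelOpₗ, LinearMap.mk₂_apply, one_mul, Lp.norm_toLp, Lp.norm_def, Lp.norm_def,
      ← ENNReal.toReal_mul]
    exact ENNReal.toReal_mono (ENNReal.mul_ne_top (Lp.eLpNorm_ne_top K) (Lp.eLpNorm_ne_top f))
      (eLpNorm_integral_mul_le (Lp.aestronglyMeasurable K) (Lp.aestronglyMeasurable f))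

theorem coeFn_kernelOp (K : Lp 𝕜 2 (μ.prod ν)) (f : Lp 𝕜 2 ν) :
    kernelOp K f =ᵐ[μ] fun x => ∫ y, K (x, y) * f y ∂ν :=
  (memLp_integral_mul (Lp.memLp K) (Lp.memLp f)).coeFn_toLp

theorem coeFn_kernelOp_toLp {K : α × β → 𝕜} (hK : MemLp K 2 (μ.prod ν)) (f : Lp 𝕜 2 ν) :
    kernelOp (hK.toLp K) f =ᵐ[μ] fun x => ∫ y, K (x, y) * f y ∂ν := by
  filter_upwards [coeFn_kernelOp (hK.toLp K) f, Measure.ae_ae_of_ae_prod hK.coeFn_toLp]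
    with x hx hKx
  rw [hx]
  refine integral_congr_ae ?_
  filter_upwards [hKx] with y hy
  rw [hy]

theorem kernelOp_indicatorConstLp_prod {s : Set α} {t : Set β} (hs : MeasurableSet s)
    (ht : MeasurableSet t) (hμs : μ s ≠ ∞) (hνt : ν t ≠ ∞) :
    kernelOp (indicatorConstLp 2 (hs.prod ht) (measure_prod_ne_top hμs hνt) (1 : 𝕜)) =
      InnerProductSpace.rankOne 𝕜 (indicatorConstLp 2 hs hμs 1) (indicatorConstLp 2 ht hνt 1) := by
  ext1 f
  refine Lp.ext ?_
  rw [InnerProductSpace.rankOne_apply, L2.inner_indicatorConstLp_one]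
  have hst : MemLp ((s ×ˢ t).indicator fun _ => (1 : 𝕜)) 2 (μ.prod ν) :=
    memLp_indicator_const 2 (hs.prod ht) 1 (.inr (measure_prod_ne_top hμs hνt))
  filter_upwards [coeFn_kernelOp_toLp hst f,
    Lp.coeFn_smul (∫ y in t, f y ∂ν) (indicatorConstLp 2 hs hμs (1 : 𝕜)),
    indicatorConstLp_coeFn (p := 2) (hs := hs) (hμs := hμs) (c := (1 : 𝕜))] with x hK hsmul hind
  rw [indicatorConstLp, hK, hsmul, Pi.smul_apply, hind, ← integral_indicator ht, smul_eq_mul,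
    ← integral_mul_const]
  congr 1 with y
  by_cases hx : x ∈ s <;> by_cases hy : y ∈ t <;> simp [hx, hy]

end KernelOperator

section Compactness

variable {𝕜 : Type*} [RCLike 𝕜]

theorem isCompactOperator_rankOne {E F : Type*} [SeminormedAddCommGroup E] [NormedSpace 𝕜 E]
    [SeminormedAddCommGroup F] [InnerProductSpace 𝕜 F] (x : E) (y : F) :
    IsCompactOperator (InnerProductSpace.rankOne 𝕜 x y) :=
  (isCompactOperator_of_locallyCompactSpace_rng
    (ContinuousLinearMap.toSpanSingleton 𝕜 x)).comp_clm (innerSL 𝕜 y)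

variable {α β : Type*} [MeasurableSpace α] [MeasurableSpace β]
  {μ : Measure α} {ν : Measure β} [SigmaFinite μ] [SigmaFinite ν]

theorem eq_top_of_forall_indicatorConstLp_prod_mem {S : Submodule 𝕜 (Lp 𝕜 2 (μ.prod ν))}
    (hS : IsClosed (S : Set (Lp 𝕜 2 (μ.prod ν))))
    (h : ∀ s t (hs : MeasurableSet s) (ht : MeasurableSet t) (hμs : μ s ≠ ∞) (hνt : ν t ≠ ∞),
      indicatorConstLp 2 (hs.prod ht) (measure_prod_ne_top hμs hνt) (1 : 𝕜) ∈ S) : S = ⊤ := by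
  rw [← hS.submodule_topologicalClosure_eq, Submodule.topologicalClosure_eq_top_iff,
    Submodule.eq_bot_iff]
  intro g hg
  rw [Lp.eq_zero_iff_ae_eq_zero]
  refine ae_eq_zero_of_forall_setIntegral_prod_eq_zero (fun s t _ _ hμs hνt => ?_)
    fun s t hs ht hμs hνt => ?_
  · exact integrableOn_Lp_of_measure_ne_top g (by simp) (measure_prod_ne_top hμs.ne hνt.ne)
  · rw [← L2.inner_indicatorConstLp_one (𝕜 := 𝕜) (hs.prod ht) (measure_prod_ne_top hμs.ne hνt.ne)]
    exact Submodule.inner_right_of_mem_orthogonal (h s t hs ht hμs.ne hνt.ne) hg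

theorem isCompactOperator_kernelOp (K : Lp 𝕜 2 (μ.prod ν)) : IsCompactOperator (kernelOp K) := by
  let S : Submodule 𝕜 (Lp 𝕜 2 (μ.prod ν)) :=
    (compactOperator (RingHom.id 𝕜) (Lp 𝕜 2 ν) (Lp 𝕜 2 μ)).comap
      (kernelOp (μ := μ) (ν := ν)).toLinearMap
  have isClosed_S : IsClosed (S : Set (Lp 𝕜 2 (μ.prod ν))) :=
    (isClosed_setOfPred_isCompactOperator (σ₁₂ := RingHom.id 𝕜) (M₁ := Lp 𝕜 2 ν)
      (M₂ := Lp 𝕜 2 μ)).preimage kernelOp.continuous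
  have S_eq_top : S = ⊤ := by
    refine eq_top_of_forall_indicatorConstLp_prod_mem isClosed_S fun s t hs ht hμs hνt => ?_
    change IsCompactOperator (kernelOp _)
    rw [kernelOp_indicatorConstLp_prod hs ht hμs hνt]
    exact isCompactOperator_rankOne _ _
  exact S_eq_top.ge (Submodule.mem_top (x := K))

end Compactness

section Domination

open scoped ComplexOrder

variable {𝕜 α β : Type*} [RCLike 𝕜] [MeasurableSpace α] [MeasurableSpace β]
  {μ : Measure α} {ν : Measure β} {p q : ℝ≥0∞} [Fact (1 ≤ p)] [Fact (1 ≤ q)]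

/-- The operator `T` dominates `S`: almost everywhere `|S f| ≤ T g` whenever `|f| ≤ g`. The
inequalities are taken in the order of `𝕜`, so they make `g` and `T g` real and nonnegative. -/
def IsDominatedBy (S T : Lp 𝕜 p ν →L[𝕜] Lp 𝕜 q μ) : Prop :=
  ∀ f g : Lp 𝕜 p ν, (fun y => (‖f y‖ : 𝕜)) ≤ᵐ[ν] g → (fun x => (‖S f x‖ : 𝕜)) ≤ᵐ[μ] T g

theorem IsDominatedBy.norm_le {S T : Lp 𝕜 p ν →L[𝕜] Lp 𝕜 q μ} (h : IsDominatedBy S T) :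
    ‖S‖ ≤ ‖T‖ := by
  refine S.opNorm_le_bound (norm_nonneg _) fun f => ?_
  have hf : MemLp (fun y => (‖f y‖ : 𝕜)) p ν := (Lp.memLp f).norm.ofReal
  have norm_toLp : ‖hf.toLp _‖ = ‖f‖ := by
    rw [Lp.norm_toLp, Lp.norm_def, eLpNorm_congr_norm_ae (g := f) (.of_forall fun y => by simp)]
  calc ‖S f‖ ≤ ‖T (hf.toLp _)‖ := by
        refine Lp.norm_le_norm_of_ae_le ?_
        filter_upwards [h f _ hf.coeFn_toLp.symm.le] with x hx
        have hre := (RCLike.le_iff_re_im.1 hx).1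
        rw [RCLike.ofReal_re] at hre
        exact hre.trans (RCLike.re_le_norm _)
    _ ≤ ‖T‖ * ‖hf.toLp _‖ := T.le_opNorm _
    _ = ‖T‖ * ‖f‖ := by rw [norm_toLp]

theorem IsDominatedBy.pow {S T : Lp 𝕜 p μ →L[𝕜] Lp 𝕜 p μ} (h : IsDominatedBy S T) (n : ℕ) :
    IsDominatedBy (S ^ n) (T ^ n) := by
  induction n with
  | zero => exact fun f g hfg => hfg
  | succ n ih =>
    intro f g hfg
    rw [pow_succ', pow_succ']
    exact h _ _ (ih f g hfg)

theorem isDominatedBy_kernelOp [SFinite μ] [SFinite ν] {K₁ K₂ : Lp 𝕜 2 (μ.prod ν)}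
    (hK : (fun p => (‖K₁ p‖ : 𝕜)) ≤ᵐ[μ.prod ν] K₂) :
    IsDominatedBy (kernelOp K₁) (kernelOp K₂) := by
  intro f g hfg
  filter_upwards [coeFn_kernelOp K₁ f, coeFn_kernelOp K₂ g,
    ae_integrable_mul_prodMk_left (Lp.memLp K₁) (Lp.memLp f),
    ae_integrable_mul_prodMk_left (Lp.memLp K₂) (Lp.memLp g),
    Measure.ae_ae_of_ae_prod hK] with x hx₁ hx₂ hi₁ hi₂ hKx
  rw [hx₁, hx₂]
  calc ((‖∫ y, K₁ (x, y) * f y ∂ν‖ : ℝ) : 𝕜)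
      ≤ ((∫ y, ‖K₁ (x, y) * f y‖ ∂ν : ℝ) : 𝕜) :=
        RCLike.ofReal_le_ofReal.2 (norm_integral_le_integral_norm _)
    _ = ∫ y, (‖K₁ (x, y) * f y‖ : 𝕜) ∂ν := integral_ofReal.symm
    _ ≤ ∫ y, K₂ (x, y) * g y ∂ν := by
        refine integral_mono_ae hi₁.norm.ofReal hi₂ ?_
        filter_upwards [hKx, hfg] with y hKy hfy
        rw [norm_mul, RCLike.ofReal_mul]
        exact mul_le_mul hKy hfy (by simp) ((RCLike.ofReal_nonneg.2 (norm_nonneg _)).trans hKy)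

end Domination

section IntegralOperator

variable {μ : Measure Ω} {Γ : Ω → Ω → ℝ}

theorem IsDigraphon.memLp [IsFiniteMeasure μ] (hΓ : IsDigraphon Γ) (p : ℝ≥0∞) :
    MemLp (Function.uncurry Γ) p (μ.prod μ) := by
  refine .of_bound hΓ.1.aestronglyMeasurable 1 (.of_forall fun ⟨x, y⟩ => ?_)
  rw [Function.uncurry_apply_pair, Real.norm_of_nonneg (hΓ.2 x y).1]
  exact (hΓ.2 x y).2

variable [SFinite μ]

theorem memLp_swap_ofReal {p : ℝ≥0∞} (hΓ : MemLp (Function.uncurry Γ) p (μ.prod μ)) :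
    MemLp (fun p : Ω × Ω => (Γ p.2 p.1 : ℂ)) p (μ.prod μ) :=
  (hΓ.comp_measurePreserving Measure.measurePreserving_swap).ofReal

/-- The operator `T_Γ` on complex `L²`, for a square-integrable real kernel `Γ`. Since `T_Γ`
integrates against the first variable of `Γ`, it is the `kernelOp` of the transpose. -/
noncomputable def integralOp (hΓ : MemLp (Function.uncurry Γ) 2 (μ.prod μ)) :
    Lp ℂ 2 μ →L[ℂ] Lp ℂ 2 μ :=
  kernelOp ((memLp_swap_ofReal hΓ).toLp _)

theorem coeFn_integralOp (hΓ : MemLp (Function.uncurry Γ) 2 (μ.prod μ)) (f : Lp ℂ 2 μ) :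
    integralOp hΓ f =ᵐ[μ] fun x => ∫ y, f y * (Γ y x : ℂ) ∂μ := by
  simp_rw [mul_comm (f _)]
  exact coeFn_kernelOp_toLp (memLp_swap_ofReal hΓ) f

theorem isEigenvalue_iff_hasEigenvalue (hΓ : MemLp (Function.uncurry Γ) 2 (μ.prod μ)) (τ : ℂ) :
    IsEigenvalue μ Γ τ ↔
      Module.End.HasEigenvalue (integralOp hΓ : Module.End ℂ (Lp ℂ 2 μ)) τ := by
  constructor
  · rintro ⟨f, hf, hf0, hτ⟩
    refine Module.End.hasEigenvalue_of_hasEigenvector (x := hf.toLp f)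
      (Module.End.hasEigenvector_iff.2 ⟨Module.End.mem_eigenspace_iff.2 (Lp.ext ?_), ?_⟩)
    · filter_upwards [coeFn_integralOp hΓ (hf.toLp f), Lp.coeFn_smul τ (hf.toLp f), hf.coeFn_toLp,
        hτ] with x hT hsmul hfx hτx
      rw [ContinuousLinearMap.coe_coe, hT, hsmul, Pi.smul_apply, hfx, smul_eq_mul, ← hτx]
      refine integral_congr_ae ?_
      filter_upwards [hf.coeFn_toLp] with y hy
      rw [hy]
    · exact fun h => hf0 (hf.coeFn_toLp.symm.trans ((Lp.eq_zero_iff_ae_eq_zero).1 h))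
  · intro h
    obtain ⟨f, hf⟩ := h.exists_hasEigenvector
    refine ⟨f, Lp.memLp f, fun h0 => hf.2 ((Lp.eq_zero_iff_ae_eq_zero).2 h0), ?_⟩
    have hTf : integralOp hΓ f = τ • f := hf.apply_eq_smul
    filter_upwards [coeFn_integralOp hΓ f, Lp.coeFn_smul τ f] with x hT hsmul
    rw [← hT, hTf, hsmul, Pi.smul_apply, smul_eq_mul]

theorem isDominatedBy_integralOp {Γ₁ Γ₂ : Ω → Ω → ℝ}
    (h₁ : MemLp (Function.uncurry Γ₁) 2 (μ.prod μ)) (h₂ : MemLp (Function.uncurry Γ₂) 2 (μ.prod μ))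
    (hle : ∀ᵐ p : Ω × Ω ∂(μ.prod μ), |Γ₁ p.1 p.2| ≤ Γ₂ p.1 p.2) :
    IsDominatedBy (integralOp h₁) (integralOp h₂) := by
  refine isDominatedBy_kernelOp ?_
  filter_upwards [(memLp_swap_ofReal h₁).coeFn_toLp, (memLp_swap_ofReal h₂).coeFn_toLp,
    Measure.measurePreserving_swap.quasiMeasurePreserving.ae hle] with p hp₁ hp₂ hp
  rw [hp₁, hp₂, Complex.norm_real]
  exact RCLike.ofReal_le_ofReal.2 hp

end IntegralOperator

theorem specRad_eq_toReal_spectralRadius {μ : Measure Ω} [SigmaFinite μ] {Γ : Ω → Ω → ℝ}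
    (hΓ : MemLp (Function.uncurry Γ) 2 (μ.prod μ)) :
    specRad μ Γ = (spectralRadius ℂ (integralOp hΓ)).toReal := by
  simp only [specRad, isEigenvalue_iff_hasEigenvalue hΓ]
  exact (isGreatest_toReal_spectralRadius_of_isCompactOperator
    (isCompactOperator_kernelOp _)).csSup_eq

theorem specRad_monotone_general (μ : Measure Ω) [SigmaFinite μ] (Γ₁ Γ₂ : Ω → Ω → ℝ)
    (h₁ : AEStronglyMeasurable (Function.uncurry Γ₁) (μ.prod μ))
    (h₂ : MemLp (Function.uncurry Γ₂) 2 (μ.prod μ))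
    (hle : ∀ᵐ p : Ω × Ω ∂(μ.prod μ), |Γ₁ p.1 p.2| ≤ Γ₂ p.1 p.2) :
    specRad μ Γ₁ ≤ specRad μ Γ₂ := by
  have h₁' : MemLp (Function.uncurry Γ₁) 2 (μ.prod μ) := h₂.mono' h₁ hle
  rw [specRad_eq_toReal_spectralRadius h₁', specRad_eq_toReal_spectralRadius h₂]
  refine ENNReal.toReal_mono (spectralRadius_ne_top _) ?_
  refine spectralRadius_le_spectralRadius_of_norm_pow_le fun n => ?_
  exact ((isDominatedBy_integralOp h₁' h₂ hle).pow n).norm_le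

/-- Monotonicity of the spectral radius: if `Γ₁ ≤ Γ₂` almost everywhere,
then `ρ(Γ₁) ≤ ρ(Γ₂)`. -/
theorem specRad_monotone
    {Ω : Type*} [MeasurableSpace Ω] (μ : Measure Ω) [IsProbabilityMeasure μ]
    (Γ₁ Γ₂ : Ω → Ω → ℝ) (h₁ : IsDigraphon Γ₁) (h₂ : IsDigraphon Γ₂)
    (hle : ∀ᵐ p : Ω × Ω ∂(μ.prod μ), Γ₁ p.1 p.2 ≤ Γ₂ p.1 p.2) :
    specRad μ Γ₁ ≤ specRad μ Γ₂ := by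
  refine specRad_monotone_general μ Γ₁ Γ₂ h₁.1.aestronglyMeasurable (h₂.memLp 2) ?_
  filter_upwards [hle] with p hp
  rwa [abs_of_nonneg (h₁.2 p.1 p.2).1]

end Digraphon
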